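/- arXiv:2401.07266 — 2 statements merged into one kernel-verified Lean document; each statement's English description precedes it below -/
import Mathlib

section
/- The number of labelled trees on [n] containing two fixed disjoint edges ij and kl is 4n^{n−4}, and the number containing two fixed edges ij and ik sharing a vertex is 3n^{n−4} (for n ≥ 4 and i,j,k,l distinct). -/
open Finset SimpleGraph

def Rch {V : Type*} (f : V → V) (v w : V) : Prop := ∃ m : ℕ, f^[m] v = w

lemma Rch.rfl' {V : Type*} (f : V → V) (v : V) : Rch f v v := ⟨0, rfl⟩

lemma Rch.step {V : Type*} {f : V → V} {v w : V} (h : Rch f (f v) w) : Rch f v w := by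
  obtain ⟨m, hm⟩ := h
  exact ⟨m + 1, by rwa [Function.iterate_succ_apply]⟩

lemma Rch.trans {V : Type*} {f : V → V} {u v w : V} (h : Rch f u v) (h' : Rch f v w) :
    Rch f u w := by
  obtain ⟨m, rfl⟩ := h
  obtain ⟨m', rfl⟩ := h'
  exact ⟨m' + m, by rw [Function.iterate_add_apply]⟩

lemma Rch.agree {V : Type*} {f g : V → V} {k : V} (hfg : ∀ v, v ≠ k → f v = g v) {v w : V}
    (h : Rch g v w) : Rch f v w ∨ Rch f v k := by
  obtain ⟨m, hm⟩ := h
  induction m generalizing v with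
  | zero => left; exact ⟨0, hm⟩
  | succ m ih =>
    by_cases hv : v = k
    · right; exact ⟨0, hv⟩
    · rw [Function.iterate_succ_apply, ← hfg v hv] at hm
      rcases ih hm with h | h
      · exact Or.inl h.step
      · exact Or.inr h.step

lemma Rch.fix {V : Type*} {f : V → V} {v w : V} (hf : f v = v) (h : Rch f v w) : w = v := by
  obtain ⟨m, rfl⟩ := h
  exact Function.iterate_fixed hf m

lemma Rch.uniq {V : Type*} {f : V → V} {v a b : V} (ha : f a = a) (hb : f b = b)
    (h : Rch f v a) (h' : Rch f v b) : a = b := by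
  obtain ⟨m, hm⟩ := h
  obtain ⟨m', hm'⟩ := h'
  have h1 : f^[m' + m] v = a := by
    rw [Function.iterate_add_apply, hm, Function.iterate_fixed ha]
  have h2 : f^[m + m'] v = b := by
    rw [Function.iterate_add_apply, hm', Function.iterate_fixed hb]
  rw [← h1, ← h2, add_comm]

/-- a periodic point reaching a fixed point is that fixed point -/
lemma Rch.cyc {V : Type*} {f : V → V} {v a : V} (ha : f a = a) (h : Rch f v a)
    (hc : Rch f (f v) v) : v = a := by
  obtain ⟨p, hp⟩ := hc
  obtain ⟨m, hm⟩ := h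
  have hp' : f^[p + 1] v = v := by rwa [Function.iterate_succ_apply]
  have h1 : f^[(p + 1) * m] v = v := by
    rw [Function.iterate_mul]; exact Function.iterate_fixed hp' m
  have h2 : (p + 1) * m = p * m + m := by ring
  rw [h2, Function.iterate_add_apply, hm, Function.iterate_fixed ha] at h1
  exact h1.symm

open Classical in
noncomputable def FS {V : Type*} [Fintype V] (S : Finset V) : Finset (V → V) :=
  univ.filter fun f => (∀ v ∈ S, f v = v) ∧ ∀ v, ∃ s ∈ S, Rch f v s

lemma mem_FS {V : Type*} [Fintype V] {S : Finset V} {f : V → V} :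
    f ∈ FS S ↔ (∀ v ∈ S, f v = v) ∧ ∀ v, ∃ s ∈ S, Rch f v s := by
  simp [FS]

open Classical in
lemma cut {V : Type*} [Fintype V] (S : Finset V) (k l : V) (hk : k ∉ S)
    (Q : (V → V) → Prop) (hQ : ∀ f x, Q (Function.update f k x) ↔ Q f) :
    #{f ∈ FS S | f k = l ∧ Q f} = #{g ∈ FS (insert k S) | ¬ Rch g l k ∧ Q g} := by
  refine Finset.card_nbij' (fun f => Function.update f k k) (fun g => Function.update g k l)
    ?_ ?_ ?_ ?_
  · intro f hf
    simp only [coe_filter, mem_FS, Set.mem_ofPred_eq] at hf ⊢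
    obtain ⟨⟨h1, h2⟩, h3, h4⟩ := hf
    have hag : ∀ v, v ≠ k → Function.update f k k v = f v := fun v hv => by simp [hv]
    refine ⟨⟨?_, ?_⟩, ?_, (hQ _ _).2 h4⟩
    · intro v hv
      by_cases hvk : v = k
      · simp [hvk]
      · rw [hag v hvk]; exact h1 v (by simpa [hvk] using hv)
    · intro v
      obtain ⟨s, hs, hr⟩ := h2 v
      rcases hr.agree hag with h | h
      · exact ⟨s, by simp [hs], h⟩
      · exact ⟨k, by simp, h⟩
    · intro h
      have h5 : Rch f l k := by
        rcases h.agree (fun v hv => (hag v hv).symm) with h | h <;> exact h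
      obtain ⟨s, hs, hr⟩ := h2 k
      have := Rch.cyc (h1 s hs) hr (by rwa [h3])
      exact hk (this ▸ hs)
  · intro g hg
    simp only [coe_filter, mem_FS, Set.mem_ofPred_eq] at hg ⊢
    obtain ⟨⟨h1, h2⟩, h3, h4⟩ := hg
    have hag : ∀ v, v ≠ k → Function.update g k l v = g v := fun v hv => by simp [hv]
    refine ⟨⟨?_, ?_⟩, by simp, (hQ _ _).2 h4⟩
    · intro v hv
      have hvk : v ≠ k := fun h => hk (h ▸ hv)
      rw [hag v hvk]; exact h1 v (by simp [hv])
    · have hl : ∃ s ∈ S, Rch (Function.update g k l) l s := by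
        obtain ⟨s, hs, hr⟩ := h2 l
        rcases Finset.mem_insert.1 hs with rfl | hs
        · exact absurd hr h3
        · rcases hr.agree hag with h | h
          · exact ⟨s, hs, h⟩
          · exfalso; apply h3
            rcases h.agree (fun v hv => (hag v hv).symm) with h | h <;> exact h
      have hk' : ∃ s ∈ S, Rch (Function.update g k l) k s := by
        obtain ⟨s, hs, h⟩ := hl
        exact ⟨s, hs, Rch.step (by simpa using h)⟩
      intro v
      obtain ⟨s, hs, hr⟩ := h2 v
      obtain ⟨t, ht, htr⟩ := hk'
      rcases Finset.mem_insert.1 hs with rfl | hs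
      · have : Rch (Function.update g s l) v s := by
          rcases hr.agree hag with h | h <;> exact h
        exact ⟨t, ht, this.trans htr⟩
      · rcases hr.agree hag with h | h
        · exact ⟨s, hs, h⟩
        · exact ⟨t, ht, h.trans htr⟩
  · intro f hf
    simp only [coe_filter, Set.mem_ofPred_eq] at hf
    simp [← hf.2.1]
  · intro g hg
    simp only [coe_filter, mem_FS, Set.mem_ofPred_eq] at hg
    have := hg.1.1 k (by simp)
    simp only [Function.update_idem]
    exact Function.update_eq_self_iff.2 this.symm

lemma Rch.conj {V : Type*} (e : Equiv.Perm V) {g : V → V} {v w : V} (h : Rch g v w) :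
    Rch (e ∘ g ∘ e.symm) (e v) (e w) := by
  obtain ⟨m, rfl⟩ := h
  refine ⟨m, ?_⟩
  have : Function.Semiconj e g (e ∘ g ∘ e.symm) := fun x => by simp
  exact ((this.iterate_right m) v).symm

lemma FS_conj {V : Type*} [Fintype V] (e : Equiv.Perm V) {S : Finset V}
    (he : ∀ s ∈ S, e s ∈ S) (he' : ∀ s ∈ S, e.symm s ∈ S) {g : V → V} (h : g ∈ FS S) :
    e ∘ g ∘ e.symm ∈ FS S := by
  rw [mem_FS] at h ⊢
  refine ⟨fun v hv => by simp [h.1 _ (he' v hv)], fun v => ?_⟩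
  obtain ⟨s, hs, hr⟩ := h.2 (e.symm v)
  exact ⟨e s, he s hs, by simpa using hr.conj e⟩

open Classical in
lemma swap_card_le {V : Type*} [Fintype V] (S : Finset V) (l r r' : V) (hl : l ∉ S)
    (hr : r ∈ S) (hr' : r' ∈ S) :
    #{g ∈ FS S | Rch g l r} ≤ #{g ∈ FS S | Rch g l r'} := by
  have hsw : ∀ s ∈ S, Equiv.swap r r' s ∈ S := by
    intro s hs
    rw [Equiv.swap_apply_def]; split_ifs <;> assumption
  refine Finset.card_le_card_of_injOn
    (fun g => Equiv.swap r r' ∘ g ∘ (Equiv.swap r r').symm) ?_ ?_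
  · intro g hg
    simp only [coe_filter, Set.mem_ofPred_eq] at hg ⊢
    refine ⟨FS_conj _ hsw (by simpa using hsw) hg.1, ?_⟩
    have := hg.2.conj (Equiv.swap r r')
    rwa [Equiv.swap_apply_left, Equiv.swap_apply_of_ne_of_ne] at this
    · rintro rfl; exact hl hr
    · rintro rfl; exact hl hr'
  · intro g _ g' _ h
    funext x
    have := congrFun h (Equiv.swap r r' x)
    simpa using this

open Classical in
lemma reach_card {V : Type*} [Fintype V] (S : Finset V) (l r : V) (hl : l ∉ S)
    (hr : r ∈ S) : #S * #{g ∈ FS S | Rch g l r} = #(FS S) := by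
  have h1 : ∑ r' ∈ S, #{g ∈ FS S | Rch g l r'} = #S * #{g ∈ FS S | Rch g l r} := by
    rw [Finset.sum_congr rfl (fun r' hr' => le_antisymm (swap_card_le S l r' r hl hr' hr)
      (swap_card_le S l r r' hl hr hr'))]
    simp
  rw [← h1]
  simp only [Finset.card_filter]
  rw [Finset.sum_comm, Finset.card_eq_sum_ones]
  refine Finset.sum_congr rfl fun g hg => ?_
  rw [mem_FS] at hg
  rw [← Finset.card_filter, Finset.card_eq_one]
  obtain ⟨s, hs, h⟩ := hg.2 l
  refine ⟨s, ?_⟩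
  ext t
  simp only [mem_filter, mem_singleton]
  constructor
  · rintro ⟨ht, htr⟩
    exact Rch.uniq (hg.1 t ht) (hg.1 s hs) htr h
  · rintro rfl; exact ⟨hs, h⟩

open Classical in
lemma nreach_card {V : Type*} [Fintype V] (S : Finset V) (l k : V) (hk : k ∉ S)
    (hl : l ∉ insert k S) :
    (#S + 1) * #{g ∈ FS (insert k S) | ¬ Rch g l k} = #S * #(FS (insert k S)) := by
  have h := reach_card (insert k S) l k hl (by simp)
  rw [Finset.card_insert_of_notMem hk] at h
  have h2 := Finset.card_filter_add_card_filter_not (s := FS (insert k S)) (fun g => Rch g l k)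
  nlinarith

open Classical in
lemma nreach_mem {V : Type*} [Fintype V] (S : Finset V) (l k : V) (hk : k ∉ S)
    (hl : l ∈ S) : {g ∈ FS (insert k S) | ¬ Rch g l k} = FS (insert k S) := by
  rw [Finset.filter_eq_self]
  intro g hg h
  rw [mem_FS] at hg
  have := h.fix (hg.1 l (by simp [hl]))
  exact hk (this ▸ hl)

open Classical in
lemma FS_rec {V : Type*} [Fintype V] (S : Finset V) (k : V) (hk : k ∉ S) :
    (#S + 1) * #(FS S) = Fintype.card V * #S * #(FS (insert k S)) := by
  have h0 : #(FS S) = ∑ l : V, #{g ∈ FS (insert k S) | ¬ Rch g l k} := by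
    rw [Finset.card_eq_sum_card_fiberwise (f := fun f : V → V => f k) (t := univ) (by simp)]
    refine Finset.sum_congr rfl fun l _ => ?_
    simpa using cut S k l hk (fun _ => True) (by simp)
  have h1 : ∀ l : V, (#S + 1) * #{g ∈ FS (insert k S) | ¬ Rch g l k}
      + (if l = k then #S * #(FS (insert k S)) else 0)
      = #S * #(FS (insert k S)) + (if l ∈ S then #(FS (insert k S)) else 0) := by
    intro l
    by_cases hlk : l = k
    · subst hlk
      have : {g ∈ FS (insert l S) | ¬ Rch g l l} = ∅ := by
        rw [Finset.filter_eq_empty_iff]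
        intro g _ h; exact h (Rch.rfl' g l)
      simp [this, hk]
    · by_cases hl : l ∈ S
      · rw [nreach_mem S l k hk hl]; simp [hl, hlk]; ring
      · rw [nreach_card S l k hk (by simp [hl, hlk])]; simp [hl, hlk]
  have h2 := Finset.sum_congr (rfl : (univ : Finset V) = univ) (fun l _ => h1 l)
  rw [Finset.sum_add_distrib, Finset.sum_add_distrib, ← Finset.mul_sum, ← h0] at h2
  simp at h2
  linarith

open Classical in
lemma FS_card {V : Type*} [Fintype V] (d : ℕ) (S : Finset V) (hS : #S + d = Fintype.card V) :
    Fintype.card V * #(FS S) = #S * Fintype.card V ^ d := by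
  induction d generalizing S with
  | zero =>
    have hu : S = univ := Finset.eq_univ_of_card S (by simpa using hS)
    have : FS S = {id} := by
      ext f
      rw [mem_FS, hu, mem_singleton]
      constructor
      · intro h; funext v; exact h.1 v (by simp)
      · rintro rfl; exact ⟨by simp, fun v => ⟨v, by simp, Rch.rfl' _ _⟩⟩
    rw [this]; simp [hu]
  | succ d ih =>
    obtain ⟨k, hk⟩ : ∃ k, k ∉ S := by
      by_contra! h
      have : S = univ := Finset.eq_univ_iff_forall.2 h
      rw [this, Finset.card_univ] at hS; omega
    have h1 := ih (insert k S) (by rw [Finset.card_insert_of_notMem hk]; omega)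
    have h2 := FS_rec S k hk
    rw [Finset.card_insert_of_notMem hk] at h1
    have : (#S + 1) * (Fintype.card V * #(FS S)) = (#S + 1) * (#S * Fintype.card V ^ (d+1)) := by
      calc _ = Fintype.card V * ((#S + 1) * #(FS S)) := by ring
        _ = Fintype.card V * #S * (Fintype.card V * #(FS (insert k S))) := by rw [h2]; ring
        _ = _ := by rw [h1]; ring
    exact Nat.eq_of_mul_eq_mul_left (by omega) this

lemma graph_adj {V : Type*} {f : V → V} {a b : V} :
    (SimpleGraph.fromRel (fun a b => f a = b)).Adj a b ↔ a ≠ b ∧ (f a = b ∨ f b = a) := by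
  simp [SimpleGraph.fromRel_adj]

lemma graph_connected {V : Type*} {f : V → V} {r : V} (h : ∀ v, Rch f v r) :
    (SimpleGraph.fromRel (fun a b => f a = b)).Connected := by
  have key : ∀ v, (SimpleGraph.fromRel (fun a b => f a = b)).Reachable v r := by
    intro v
    obtain ⟨m, hm⟩ := h v
    induction m generalizing v with
    | zero => subst hm; exact SimpleGraph.Reachable.refl _
    | succ m ih =>
      rw [Function.iterate_succ_apply] at hm
      have h1 := ih (f v) hm
      by_cases hv : f v = v
      · rwa [hv] at h1
      · exact (SimpleGraph.Adj.reachable (graph_adj.2 ⟨Ne.symm hv, Or.inl rfl⟩)).trans h1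
  have : Nonempty V := ⟨r⟩
  exact SimpleGraph.Connected.mk fun u v => (key u).trans (key v).symm

lemma graph_isTree {V : Type*} [Fintype V] {f : V → V} {r : V} (hr : f r = r)
    (h : ∀ v, Rch f v r) : (SimpleGraph.fromRel (fun a b => f a = b)).IsTree := by
  classical
  have hc := graph_connected h
  rw [SimpleGraph.isTree_iff_connected_and_card]
  refine ⟨hc, le_antisymm ?_ hc.card_vert_le_card_edgeSet_add_one⟩
  have hsub : (SimpleGraph.fromRel (fun a b => f a = b)).edgeSet ⊆
      ((univ.erase r).image (fun v => s(v, f v)) : Finset (Sym2 V)) := by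
    intro e
    induction e using Sym2.ind with
    | _ a b =>
      rw [SimpleGraph.mem_edgeSet, graph_adj]
      rintro ⟨hab, h1 | h1⟩
      · simp only [coe_image, Set.mem_image]
        refine ⟨a, ?_, by rw [h1]⟩
        simp; rintro rfl; exact hab (hr.symm.trans h1)
      · simp only [coe_image, Set.mem_image]
        refine ⟨b, ?_, by rw [h1, Sym2.eq_swap]⟩
        simp; rintro rfl; exact hab (h1.symm.trans hr)
  have h1 : Nat.card (SimpleGraph.fromRel (fun a b => f a = b)).edgeSet ≤
      #((univ.erase r).image (fun v => s(v, f v))) := by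
    have := Set.ncard_le_ncard hsub (Finset.finite_toSet _)
    rwa [Set.ncard_coe_finset] at this
  have h2 : #((univ.erase r).image (fun v => s(v, f v))) ≤ Fintype.card V - 1 := by
    refine Finset.card_image_le.trans ?_
    simp
  have h3 : 0 < Fintype.card V := Fintype.card_pos_iff.2 ⟨r⟩
  rw [Nat.card_eq_fintype_card (α := V)]
  omega

lemma graph_inj {V : Type*} {f g : V → V} {r : V} (hf : f r = r) (hg : g r = r)
    (h : ∀ v, Rch f v r)
    (he : SimpleGraph.fromRel (fun a b => f a = b) = SimpleGraph.fromRel (fun a b => g a = b)) :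
    f = g := by
  have key : ∀ m v, f^[m] v = r → f v = g v := by
    intro m
    induction m with
    | zero => intro v hv; simp at hv; rw [hv, hf, hg]
    | succ m ih =>
      intro v hv
      by_cases hvr : v = r
      · rw [hvr, hf, hg]
      have hne : f v ≠ v := fun hfix => hvr (Rch.fix hfix (h v)).symm
      have hadj : (SimpleGraph.fromRel (fun a b => g a = b)).Adj v (f v) := by
        rw [← he]; exact graph_adj.2 ⟨hne.symm, Or.inl rfl⟩
      rw [Function.iterate_succ_apply] at hv
      have h2 := ih (f v) hv
      rcases (graph_adj.1 hadj).2 with h3 | h3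
      · exact h3.symm
      · exfalso
        rw [h3] at h2
        exact hvr (Rch.cyc hf (h v) ⟨1, h2⟩)
  funext v
  obtain ⟨m, hm⟩ := h v
  exact key m v hm

lemma graph_surj {V : Type*} {T : SimpleGraph V} (hT : T.IsTree) (r : V) :
    ∃ f : V → V, f r = r ∧ (∀ v, Rch f v r) ∧ SimpleGraph.fromRel (fun a b => f a = b) = T := by
  classical
  have hex : ∀ v, ∃ w, (v = r → w = r) ∧ (v ≠ r → T.Adj v w ∧ T.dist w r < T.dist v r) := by
    intro v
    by_cases hv : v = r
    · exact ⟨r, by simp [hv]⟩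
    obtain ⟨p, hp⟩ := (hT.connected.preconnected v r).exists_walk_length_eq_dist
    cases p with
    | nil => exact absurd rfl hv
    | @cons _ w _ hadj q =>
      refine ⟨w, by simp [hv], fun _ => ⟨hadj, ?_⟩⟩
      have := SimpleGraph.dist_le q
      rw [SimpleGraph.Walk.length_cons] at hp
      omega
  choose f hf1 hf2 using hex
  have hfr : f r = r := hf1 r rfl
  have hreach : ∀ d v, T.dist v r = d → Rch f v r := by
    intro d
    induction d using Nat.strong_induction_on with
    | _ d ih =>
      intro v hd
      by_cases hv : v = r
      · exact ⟨0, hv⟩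
      · exact Rch.step (ih _ (hd ▸ (hf2 v hv).2) (f v) rfl)
  have hr : ∀ v, Rch f v r := fun v => hreach _ v rfl
  refine ⟨f, hfr, hr, ?_⟩
  have hle : SimpleGraph.fromRel (fun a b => f a = b) ≤ T := by
    intro a b hab
    obtain ⟨hne, h | h⟩ := graph_adj.1 hab
    · have : a ≠ r := by rintro rfl; exact hne (hfr.symm.trans h)
      exact h ▸ (hf2 a this).1
    · have : b ≠ r := by rintro rfl; exact hne (h.symm.trans hfr)
      exact h ▸ (hf2 b this).1.symm
  have hmin := SimpleGraph.isTree_iff_minimal_connected.1 hT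
  exact le_antisymm hle (hmin.2 (graph_connected hr) hle)

lemma mem_FS_single {V : Type*} [Fintype V] {r : V} {f : V → V} :
    f ∈ FS {r} ↔ f r = r ∧ ∀ v, Rch f v r := by
  simp [mem_FS]

open Classical in
lemma tree_count {V : Type*} [Fintype V] (r : V) (P : SimpleGraph V → Prop) :
    Nat.card {T : SimpleGraph V // T.IsTree ∧ P T} =
      #{f ∈ FS ({r} : Finset V) | P (SimpleGraph.fromRel (fun a b => f a = b))} := by
  rw [← Fintype.card_coe, ← Nat.card_eq_fintype_card]
  symm
  refine Nat.card_congr (Equiv.ofBijective (fun f => ⟨SimpleGraph.fromRel (fun a b => f.1 a = b),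
    ?_⟩) ⟨?_, ?_⟩)
  · have := f.2
    rw [mem_filter, mem_FS_single] at this
    exact ⟨graph_isTree this.1.1 this.1.2, this.2⟩
  · rintro ⟨f, hf⟩ ⟨g, hg⟩ h
    rw [mem_filter, mem_FS_single] at hf hg
    simp only [Subtype.mk.injEq] at h ⊢
    exact graph_inj hf.1.1 hg.1.1 hf.1.2 h
  · rintro ⟨T, hT, hP⟩
    obtain ⟨f, h1, h2, h3⟩ := graph_surj hT r
    exact ⟨⟨f, by rw [mem_filter, mem_FS_single]; exact ⟨⟨h1, h2⟩, h3 ▸ hP⟩⟩, by simpa using h3⟩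

lemma adj_root {V : Type*} {f : V → V} {i j : V} (hi : f i = i) (hij : i ≠ j) :
    (SimpleGraph.fromRel (fun a b => f a = b)).Adj i j ↔ f j = i := by
  rw [graph_adj, hi]; tauto

open Classical in
lemma two_parents {V : Type*} [Fintype V] (i j k l : V)
    (hij : i ≠ j) (hik : i ≠ k) (hjk : j ≠ k) :
    #{f ∈ FS ({i} : Finset V) | f j = i ∧ f k = l} =
      #{g ∈ FS (insert k {j, i} : Finset V) | ¬ Rch g l k} := by
  rw [cut {i} j i (by simp [hij.symm]) (fun f => f k = l)
    (by intro f x; rw [Function.update_of_ne hjk.symm])]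
  have h := nreach_mem {i} i j (by simp [hij.symm]) (by simp)
  rw [← Finset.filter_filter, h]
  simpa using cut {j, i} k l (by simp [hjk.symm, hik.symm]) (fun _ => True) (by simp)

open Classical in
lemma FS_three {V : Type*} [Fintype V] (hn : 4 ≤ Fintype.card V) (i j k : V)
    (hij : i ≠ j) (hik : i ≠ k) (hjk : j ≠ k) :
    #(FS (insert k {j, i} : Finset V)) = 3 * Fintype.card V ^ (Fintype.card V - 4) := by
  have hc : #(insert k {j, i} : Finset V) = 3 := by
    rw [Finset.card_eq_three]
    exact ⟨k, j, i, hjk.symm, hik.symm, hij.symm, rfl⟩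
  have h := FS_card (Fintype.card V - 3) (insert k {j, i} : Finset V) (by rw [hc]; omega)
  rw [hc, show Fintype.card V - 3 = (Fintype.card V - 4) + 1 by omega] at h
  refine Nat.eq_of_mul_eq_mul_left (show 0 < Fintype.card V by omega) ?_
  rw [h]; ring

open Classical in
lemma two_parents_count {V : Type*} [Fintype V] (hn : 4 ≤ Fintype.card V) (i j k l : V)
    (hij : i ≠ j) (hik : i ≠ k) (hil : i ≠ l) (hjk : j ≠ k) (hjl : j ≠ l) (hkl : k ≠ l) :
    #{f ∈ FS ({i} : Finset V) | f j = i ∧ f k = l} = 2 * Fintype.card V ^ (Fintype.card V - 4) := by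
  rw [two_parents i j k l hij hik hjk]
  have h := nreach_card ({j, i} : Finset V) l k (by simp [hjk.symm, hik.symm])
    (by simp [hkl.symm, hjl.symm, hil.symm])
  rw [FS_three hn i j k hij hik hjk, Finset.card_pair hij.symm] at h
  omega



lemma main_gen {V : Type*} [Fintype V] (hn : 4 ≤ Fintype.card V) (i j k l : V)
    (hij : i ≠ j) (hik : i ≠ k) (hil : i ≠ l) (hjk : j ≠ k) (hjl : j ≠ l)
    (hkl : k ≠ l) :
    Nat.card {T : SimpleGraph V // T.IsTree ∧ T.Adj i j ∧ T.Adj k l} =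
        4 * Fintype.card V ^ (Fintype.card V - 4) ∧
    Nat.card {T : SimpleGraph V // T.IsTree ∧ T.Adj i j ∧ T.Adj i k} =
        3 * Fintype.card V ^ (Fintype.card V - 4) := by
  classical
  constructor
  · rw [tree_count i]
    have h : {f ∈ FS ({i} : Finset V) |
        (SimpleGraph.fromRel (fun a b => f a = b)).Adj i j ∧
        (SimpleGraph.fromRel (fun a b => f a = b)).Adj k l} =
        {f ∈ FS ({i} : Finset V) | f j = i ∧ f k = l} ∪
        {f ∈ FS ({i} : Finset V) | f j = i ∧ f l = k} := by
      rw [← Finset.filter_or]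
      refine Finset.filter_congr fun f hf => ?_
      rw [adj_root (mem_FS_single.1 hf).1 hij, graph_adj]
      tauto
    refine Eq.trans (by convert congrArg Finset.card h) ?_
    rw [Finset.card_union_of_disjoint, two_parents_count hn i j k l hij hik hil hjk hjl hkl,
      two_parents_count hn i j l k hij hil hik hjl hjk hkl.symm]
    · ring
    · rw [Finset.disjoint_filter]
      rintro f hf ⟨_, h1⟩ ⟨_, h2⟩
      rw [mem_FS_single] at hf
      exact hik (Rch.cyc hf.1 (hf.2 k) ⟨1, by simp [h1, h2]⟩).symm
  · rw [tree_count i]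
    have h : {f ∈ FS ({i} : Finset V) |
        (SimpleGraph.fromRel (fun a b => f a = b)).Adj i j ∧
        (SimpleGraph.fromRel (fun a b => f a = b)).Adj i k} =
        {f ∈ FS ({i} : Finset V) | f j = i ∧ f k = i} := by
      refine Finset.filter_congr fun f hf => ?_
      rw [adj_root (mem_FS_single.1 hf).1 hij, adj_root (mem_FS_single.1 hf).1 hik]
    refine Eq.trans (by convert congrArg Finset.card h) ?_
    rw [two_parents i j k i hij hik hjk, nreach_mem _ _ _ (by simp [hjk.symm, hik.symm])
      (by simp), FS_three hn i j k hij hik hjk]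

/-- The number of labelled trees on [n] containing two fixed disjoint edges ij
and kl is 4n^{n−4}, and the number containing two fixed edges ij and ik sharing
a vertex is 3n^{n−4} (for n ≥ 4 and i,j,k,l distinct). -/
theorem stmt_16 (n : ℕ) (hn : 4 ≤ n) (i j k l : Fin n)
    (hij : i ≠ j) (hik : i ≠ k) (hil : i ≠ l) (hjk : j ≠ k) (hjl : j ≠ l)
    (hkl : k ≠ l) :
    Nat.card {T : SimpleGraph (Fin n) // T.IsTree ∧ T.Adj i j ∧ T.Adj k l} =
        4 * n ^ (n - 4) ∧
    Nat.card {T : SimpleGraph (Fin n) // T.IsTree ∧ T.Adj i j ∧ T.Adj i k} =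
        3 * n ^ (n - 4) := by
  have h := main_gen (V := Fin n) (by simpa using hn) i j k l hij hik hil hjk hjl hkl
  rwa [Fintype.card_fin] at h
end

section
/- Erdős–Gallai edge bound consequence: if an n-vertex graph G has no matching with k+1 edges (no M_{2k+2} subgraph), then e(G) ≤ max(e(K_k + complement(K_{n-k})), e(K_{2k+1})) ; in particular for n ≥ 3k+3, e(G) ≤ k(n−k) + C(k,2). -/
open Finset SimpleGraph

lemma eg_sum_conv {ι : Type*} (I : Finset ι) (a : ι → ℕ) :
    ∑ i ∈ I, (a i + 1) * a i ≤ (∑ i ∈ I, a i + 1) * ∑ i ∈ I, a i := by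
  classical
  induction I using Finset.induction_on with
  | empty => simp
  | insert i s hi ih =>
    rw [Finset.sum_insert hi, Finset.sum_insert hi]
    nlinarith [Nat.zero_le (a i * ∑ j ∈ s, a j)]

lemma eg_count {V ι : Type*} [Fintype V] [DecidableEq V] [DecidableEq ι] (G : SimpleGraph V)
    [DecidableRel G.Adj] (S : Finset V) (f : V → ι)
    (hf : ∀ v w, v ∉ S → w ∉ S → G.Adj v w → f v = f w) (k : ℕ)
    (hq : S.card + Fintype.card V ≤ (Sᶜ.image f).card + 2 * k) :
    S.card ≤ k ∧ 2 * G.edgeFinset.card ≤ S.card * (Fintype.card V - 1) +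
      (Fintype.card V - S.card) * S.card + (2 * (k - S.card) + 1) * (2 * (k - S.card)) := by
  set I := Sᶜ.image f with hI
  set c : ι → ℕ := fun i => (Sᶜ.filter (fun v => f v = i)).card with hc
  have hSc : Sᶜ.card = Fintype.card V - S.card := Finset.card_compl S
  have hSle : S.card ≤ Fintype.card V := Finset.card_le_univ S
  have hIle : I.card ≤ Sᶜ.card := Finset.card_image_le
  have hsum : Sᶜ.card = ∑ i ∈ I, c i :=
    Finset.card_eq_sum_card_fiberwise (fun v hv => Finset.mem_image_of_mem f hv)
  have hcpos : ∀ i ∈ I, 1 ≤ c i := by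
    intro i hi
    obtain ⟨v, hv, rfl⟩ := Finset.mem_image.1 hi
    exact Finset.card_pos.2 ⟨v, by simpa using hv⟩
  have hsum1 : ∑ i ∈ I, (c i - 1) + I.card = Sᶜ.card := by
    rw [hsum, Finset.card_eq_sum_ones, ← Finset.sum_add_distrib]
    exact Finset.sum_congr rfl fun i hi => Nat.sub_add_cancel (hcpos i hi)
  refine ⟨by omega, ?_⟩
  rw [← G.sum_degrees_eq_twice_card_edges, ← Finset.sum_add_sum_compl S]
  have h1 : ∑ v ∈ S, G.degree v ≤ S.card * (Fintype.card V - 1) := by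
    rw [← smul_eq_mul]
    exact Finset.sum_le_card_nsmul _ _ _ fun v _ => Nat.le_sub_one_of_lt (G.degree_lt_card_verts v)
  have h2 : ∀ v ∈ Sᶜ, G.degree v ≤ S.card + (c (f v) - 1) := by
    intro v hv
    have hsub : G.neighborFinset v ⊆ S ∪ (Sᶜ.filter (fun w => f w = f v)).erase v := by
      intro w hw
      rw [mem_neighborFinset] at hw
      by_cases hwS : w ∈ S
      · simp [hwS]
      · simp [hwS, hw.ne', hf v w (by simpa using hv) hwS hw]
    refine (Finset.card_le_card hsub).trans ((Finset.card_union_le _ _).trans ?_)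
    rw [Finset.card_erase_of_mem (by simpa using hv)]
  have h3 : ∑ v ∈ Sᶜ, G.degree v ≤ (Fintype.card V - S.card) * S.card +
      ∑ i ∈ I, (c i - 1 + 1) * (c i - 1) := by
    refine (Finset.sum_le_sum h2).trans ?_
    rw [Finset.sum_add_distrib, Finset.sum_const, hSc, smul_eq_mul]
    refine Nat.add_le_add_left (le_of_eq ?_) _
    rw [← Finset.sum_fiberwise_of_maps_to (fun v hv => Finset.mem_image_of_mem f hv)]
    refine Finset.sum_congr rfl fun i hi => ?_
    rw [Nat.sub_add_cancel (hcpos i hi), Finset.sum_congr rfl (g := fun _ => c i - 1)]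
    · simp [hc]
    · intro v hv
      rw [(Finset.mem_filter.1 hv).2]
  have h4 := eg_sum_conv I (fun i => c i - 1)
  have h5 : ∑ i ∈ I, (c i - 1) ≤ 2 * (k - S.card) := by omega
  have h6 := Nat.mul_le_mul (Nat.add_le_add_right h5 1) h5
  omega

def egJoin {V : Type*} (G : SimpleGraph V) (d : ℕ) : SimpleGraph (V ⊕ Fin d) where
  Adj x y := x ≠ y ∧ ∀ a b, x = Sum.inl a → y = Sum.inl b → G.Adj a b
  symm := ⟨fun _ _ h => ⟨h.1.symm, fun a b ha hb => (h.2 b a hb ha).symm⟩⟩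
  loopless := ⟨fun _ h => h.1 rfl⟩

lemma eg_matching {V : Type*} [Fintype V] [DecidableEq V] (G : SimpleGraph V) (d k : ℕ)
    (hd : Fintype.card V = d + 2 * k + 2)
    (M : (egJoin G d).Subgraph) (hM : M.IsPerfectMatching) :
    ∃ M : G.Subgraph, M.IsMatching ∧ M.edgeSet.ncard = k + 1 := by
  classical
  rw [Subgraph.isPerfectMatching_iff] at hM
  choose p hp hpu using hM
  have hpp : ∀ x, p (p x) = x := fun x => (hpu _ _ (hp x).symm).symm
  let E : Finset (Sym2 V) := Finset.univ.filter (fun e => e.map Sum.inl ∈ M.edgeSet)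
  let A : Finset V := Finset.univ.filter (fun a => ∃ b, p (Sum.inl a) = Sum.inl b)
  have hB : Aᶜ.card ≤ d := by
    have : Aᶜ.card ≤ ((Finset.univ : Finset (Fin d)).image (fun j : Fin d => p (Sum.inr j))).card := by
      rw [← Finset.card_image_of_injective Aᶜ (Sum.inl_injective (β := Fin d))]
      apply Finset.card_le_card
      intro x hx
      obtain ⟨a, ha, rfl⟩ := Finset.mem_image.1 hx
      rcases h : p (Sum.inl a) with b | j
      · simp [A, h] at ha
      · exact Finset.mem_image.2 ⟨j, Finset.mem_univ _, by rw [← h, hpp]⟩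
    exact this.trans (Finset.card_image_le.trans (by simp))
  have hA : A.card ≤ 2 * E.card := by
    have hex : ∀ a : V, ∃ e : Sym2 V, a ∈ A → a ∈ e ∧ e ∈ E := by
      intro a
      by_cases ha : a ∈ A
      · obtain ⟨b, hb⟩ := (Finset.mem_filter.1 ha).2
        refine ⟨s(a, b), fun _ => ⟨by simp, ?_⟩⟩
        have := hp (Sum.inl a)
        rw [hb] at this
        simpa [E] using this
      · exact ⟨s(a, a), fun h => absurd h ha⟩
    choose g hg using hex
    refine (Finset.card_le_mul_card_image_of_maps_to (f := g) (t := E) (fun a ha => (hg a ha).2) 2 ?_)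
    intro e _
    refine (Finset.card_le_card (t := e.toFinset) ?_).trans ?_
    · intro a ha
      rw [Finset.mem_filter] at ha
      rw [Sym2.mem_toFinset, ← ha.2]
      exact (hg a ha.1).1
    · rw [Sym2.card_toFinset]; split_ifs <;> omega
  have hE : k + 1 ≤ E.card := by
    have := Finset.card_add_card_compl A
    omega
  obtain ⟨T, hTE, hT⟩ := Finset.exists_subset_card_eq hE
  have hTM : ∀ a b, s(a, b) ∈ T → M.Adj (Sum.inl a) (Sum.inl b) := by
    intro a b h
    simpa [E] using hTE h
  refine ⟨{ verts := {a | ∃ b, s(a, b) ∈ T}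
            Adj := fun a b => s(a, b) ∈ T
            adj_sub := fun {a b} h => (hTM a b h).adj_sub.2 a b rfl rfl
            edge_vert := fun {a b} h => ⟨b, h⟩
            symm := ⟨fun a b h => by rwa [Sym2.eq_swap]⟩ }, ?_, ?_⟩
  · rintro a ⟨b, hb⟩
    refine ⟨b, hb, fun c hc => ?_⟩
    exact Sum.inl_injective ((hpu _ _ (hTM a c hc)).trans (hpu _ _ (hTM a b hb)).symm)
  · rw [← hT, ← Set.ncard_coe_finset]
    congr 1
    ext e
    induction e with | _ a b => simp

universe w

lemma eg_violator {V : Type w} [Fintype V] [DecidableEq V] (G : SimpleGraph V) (d k : ℕ)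
    (hd : Fintype.card V = d + 2 * k + 2)
    (hm : ¬ ∃ M : G.Subgraph, M.IsMatching ∧ M.edgeSet.ncard = k + 1) :
    ∃ (ι : Type w) (_ : DecidableEq ι) (S : Finset V) (f : V → ι),
      (∀ v w, v ∉ S → w ∉ S → G.Adj v w → f v = f w) ∧
      S.card + Fintype.card V ≤ (Sᶜ.image f).card + 2 * k := by
  classical
  have h : ¬ ∃ M : Subgraph (egJoin G d), M.IsPerfectMatching :=
    fun ⟨M, hM⟩ => hm (eg_matching G d k hd M hM)
  rw [tutte] at h
  push Not at h
  obtain ⟨u, hu⟩ := h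
  rw [IsTutteViolator] at hu
  set H := ((⊤ : (egJoin G d).Subgraph).deleteVerts u).coe with hH
  have hadj : ∀ x y (hx : x ∈ ((⊤ : (egJoin G d).Subgraph).deleteVerts u).verts)
      (hy : y ∈ ((⊤ : (egJoin G d).Subgraph).deleteVerts u).verts), (egJoin G d).Adj x y →
      H.Adj ⟨x, hx⟩ ⟨y, hy⟩ := by
    intro x y hx hy hxy
    simp at hx hy
    simp [hH, hx, hy, hxy]
  have hcardH : Nat.card ((⊤ : (egJoin G d).Subgraph).deleteVerts u).verts + u.ncard =
      Fintype.card V + d := by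
    have := Set.ncard_add_ncard_compl u
    rw [Nat.card_coe_set_eq]
    simp [← Set.compl_eq_univ_sdiff] at this ⊢
    omega
  have hpar := H.odd_ncard_oddComponents
  have hq : u.ncard + 2 ≤ H.oddComponents.ncard := by
    rw [Nat.odd_iff, Nat.odd_iff] at hpar
    omega
  have hnew : ∀ j, Sum.inr j ∈ u := by
    intro j
    by_contra hj
    have hjv : Sum.inr j ∈ ((⊤ : (egJoin G d).Subgraph).deleteVerts u).verts := by simp [hj]
    have hsub : H.oddComponents ⊆ {H.connectedComponentMk ⟨Sum.inr j, hjv⟩} := by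
      intro C _
      induction C using ConnectedComponent.ind with | _ x =>
      obtain ⟨x, hx⟩ := x
      rw [Set.mem_singleton_iff, ConnectedComponent.eq]
      by_cases hxj : x = Sum.inr j
      · subst hxj; rfl
      · exact (hadj _ _ _ _ ⟨hxj, fun a b _ hb => by cases hb⟩).reachable
    have := Set.ncard_le_ncard hsub
    rw [Set.ncard_singleton] at this
    omega
  let S : Finset V := Finset.univ.filter (fun v => Sum.inl v ∈ u)
  have hSv : ∀ v, v ∉ S → Sum.inl v ∈ ((⊤ : (egJoin G d).Subgraph).deleteVerts u).verts := by
    intro v hv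
    simpa [S] using hv
  let f : V → Option H.ConnectedComponent := fun v =>
    if hv : v ∈ S then none else some (H.connectedComponentMk ⟨Sum.inl v, hSv v hv⟩)
  refine ⟨_, inferInstance, S, f, ?_, ?_⟩
  · intro v w hv hw hvw
    simp only [f, hv, hw, dite_false]
    congr 1
    rw [ConnectedComponent.eq]
    exact (hadj _ _ _ _ ⟨by simpa using hvw.ne, fun a b ha hb => by cases ha; cases hb; exact hvw⟩).reachable
  · have hucard : S.card + d ≤ u.ncard := by
      have : ((S.disjSum (Finset.univ : Finset (Fin d)) : Finset (V ⊕ Fin d)) : Set (V ⊕ Fin d)) ⊆ u := by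
        intro x hx
        rcases x with v | j
        · simpa [S] using hx
        · exact hnew j
      have := Set.ncard_le_ncard this
      rw [Set.ncard_coe_finset] at this
      simpa using this
    have himg : H.oddComponents.ncard ≤ (Sᶜ.image f).card := by
      rw [← Set.ncard_coe_finset, ← Set.ncard_image_of_injective _ (Option.some_injective _)]
      refine Set.ncard_le_ncard ?_
      rintro _ ⟨C, _, rfl⟩
      induction C using ConnectedComponent.ind with | _ x =>
      obtain ⟨x, hx⟩ := x
      rcases x with v | j
      · have hv : v ∉ S := by simpa [S] using hx
        simp only [Finset.coe_image, Set.mem_image]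
        exact ⟨v, by simpa using hv, by simp [f, hv]⟩
      · exact absurd (hnew j) (by simpa using hx)
    omega

lemma eg_choose (m : ℕ) : 2 * Nat.choose (m + 1) 2 = (m + 1) * m := by
  have := Nat.triangle_succ m
  rw [Nat.choose_two_right, Nat.mul_div_cancel' (Nat.even_mul_pred_self _).two_dvd]
  simp

lemma eg_choose' (m : ℕ) : 2 * Nat.choose m 2 + m = m * m := by
  cases m with
  | zero => simp
  | succ m => rw [eg_choose]; ring

lemma eg_main {V : Type*} [Fintype V] [DecidableEq V] (G : SimpleGraph V)
    [DecidableRel G.Adj] (n k : ℕ) (hn : Fintype.card V = n)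
    (hm : ¬ ∃ M : G.Subgraph, M.IsMatching ∧ M.edgeSet.ncard = k + 1) :
    G.edgeFinset.card ≤ max (Nat.choose k 2 + k * (n - k)) (Nat.choose (2 * k + 1) 2) := by
  rcases Nat.lt_or_ge n (2 * k + 2) with h | h
  · refine le_max_of_le_right ((card_edgeFinset_le_card_choose_two).trans ?_)
    exact Nat.choose_le_choose 2 (by omega)
  · obtain ⟨d, rfl⟩ : ∃ d, n = d + 2 * k + 2 := ⟨n - (2 * k + 2), by omega⟩
    obtain ⟨ι, _, S, f, hf, hq⟩ := eg_violator G d k hn hm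
    obtain ⟨hs, he⟩ := eg_count G S f hf k hq
    rw [hn] at he
    set s := S.card
    obtain ⟨t, rfl⟩ := Nat.exists_eq_add_of_le hs
    have e1 : d + 2 * (s + t) + 2 - 1 = d + 2 * (s + t) + 1 := by omega
    have e2 : d + 2 * (s + t) + 2 - s = d + s + 2 * t + 2 := by omega
    have e3 : d + 2 * (s + t) + 2 - (s + t) = d + s + t + 2 := by omega
    have e4 : s + t - s = t := by omega
    rw [e1, e2, e4] at he
    rw [e3]
    have c1 := eg_choose' (s + t)
    have c2 := eg_choose (2 * (s + t))
    rw [le_max_iff]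
    by_contra! hcon
    obtain ⟨h1, h2⟩ := hcon
    generalize (s + t).choose 2 = X at *
    generalize (2 * (s + t) + 1).choose 2 = Y at *
    generalize #G.edgeFinset = e at *
    rcases Nat.lt_or_ge (2 * d + 2 * s + 1) t with ht | ht
    · have : s * (2 * d + 1) ≤ s * (s + 4 * t) := Nat.mul_le_mul_left _ (by omega)
      nlinarith
    · have : t * t ≤ t * (2 * d + 2 * s + 1) := Nat.mul_le_mul_left _ ht
      nlinarith

/-- Erdős–Gallai: if an n-vertex graph has no matching with k+1 edges, then
e(G) ≤ max(e(K_k + complement(K_{n−k})), e(K_{2k+1})); in particular, for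
n ≥ 3k+3, e(G) ≤ k(n−k) + C(k,2). -/
theorem stmt_19 {V : Type*} [Fintype V] [DecidableEq V] (G : SimpleGraph V)
    [DecidableRel G.Adj] (n k : ℕ) (hn : Fintype.card V = n)
    (hm : ¬ ∃ M : G.Subgraph, M.IsMatching ∧ M.edgeSet.ncard = k + 1) :
    G.edgeFinset.card ≤ max (Nat.choose k 2 + k * (n - k)) (Nat.choose (2 * k + 1) 2) ∧
    (3 * k + 3 ≤ n → G.edgeFinset.card ≤ k * (n - k) + Nat.choose k 2) := by
  have h := eg_main G n k hn hm
  refine ⟨h, fun hk => h.trans (max_le (by omega) ?_)⟩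
  have c1 := eg_choose' k
  have c2 := eg_choose (2 * k)
  have h2 : k * (2 * k + 3) ≤ k * (n - k) := Nat.mul_le_mul_left _ (by omega)
  nlinarith
end
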